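/- Fix a real number c with 0 ≤ c < 1, and let (u∧, v∧) be the unique solution in D = (3c, ũ) × [8−5c, ∞) of the system ψ_uv(√2−1, u, v) = 0 and ∂ψ_uv/∂t(√2−1, u, v) = 0. Then ψ_uv(t, u∧, v∧) ≥ 0 for all t ∈ [−1,1], and for every pair (u, v) with v > u such that ψ_uv(t, u, v) ≥ 0 for all t ∈ [−1,1], sup over t ∈ [−1,1] of |ψ_uv(t, u, v)| is at least sup over t ∈ [−1,1] of |ψ_uv(t, u∧, v∧)|; i.e., (u∧, v∧) induces the optimal outer quartic G¹ approximant. -/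

import Mathlib

/-- Simplified radial error of the quartic G¹ Bézier approximant of the unit circular arc. -/
noncomputable def psiQ (c t ξ η : ℝ) : ℝ :=
  (t^2 - 1)^2 *
    ((1/64)*(3*η - 4*Real.sqrt (1 - c^2)*ξ - 3*c)^2*t^4
      + (1/64)*(32*c^2*ξ^2 + 32*ξ^2 - 64*c*Real.sqrt (1 - c^2)*ξ
          - 18*η^2 + 36*c*η - 34*c^2 + 16)*t^2
      + (1/64)*((3*η + 4*Real.sqrt (1 - c^2)*ξ + 5*c)^2 - 64))

/-- Sup over `t ∈ [−1,1]` of `|f t|`. -/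
noncomputable def errSup (f : ℝ → ℝ) : ℝ :=
  sSup ((fun t => |f t|) '' Set.Icc (-1 : ℝ) 1)

/-- The quartic G¹ radial error in the variables `u = 3η − 4√(1−c²)ξ`,
`v = 3η + 4√(1−c²)ξ`. -/
noncomputable def psiUV (c t u v : ℝ) : ℝ :=
  psiQ c t ((v - u)/(8*Real.sqrt (1 - c^2))) ((u + v)/6)

noncomputable def kconst : ℝ := 2*Real.sqrt ((2*Real.sqrt 2 - 1)/7)

noncomputable def utilde (c : ℝ) : ℝ := kconst*c^2 - (2*kconst - 3)*c + kconst

/-!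
With `x = t ^ 2`, `a = u - 3 * c` and `b = v + 5 * c`, the radial error is `(1 - x) ^ 2 * p x / 64`
for the quadratic `p x = a ^ 2 * x ^ 2 + g a b * x + (b ^ 2 - 64)`. For the candidate `(A, B)` this
quadratic is `A ^ 2 * (x - τ ^ 2) ^ 2` with `τ = √2 - 1`. Since `τ ^ 2 + 2 * τ = 1`, its error
attains its maximum at both `x = 0` and `x = 1 - τ`, and the double root `τ ^ 2` lies between them.

For a better outer approximant `(a, b)`, the difference `U * x ^ 2 - P * x + W` of the quadratics of
`(A, B)` and `(a, b)` would be positive at both peaks but nonpositive at `τ ^ 2`. It is then convex,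
with `P` and `W` at most small multiples of `U = A ^ 2 - a ^ 2`. However `P = g a b - g A B`, where
`g` decreases steeply in its first argument, while the smallness of `W = B ^ 2 - b ^ 2` makes the
change in the second argument negligible; this forces `P` to be a larger multiple of `U`.
-/

/-- The coefficient of `t ^ 2` in `64 * psiUV c t u v / (t ^ 2 - 1) ^ 2`, in the shifted coordinates
`a = u - 3 * c`, `b = v + 5 * c`, for `c ^ 2 < 1`. -/
noncomputable def midCoeff (c a b : ℝ) : ℝ :=
  c ^ 2 / (1 - c ^ 2) * (b - a - 8 * c) ^ 2 - 2 * a * b + 24 * a * c - 8 * b * c + 48 * c ^ 2 + 16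

/-- The quadratic factor `64 * psiUV c t u v / (t ^ 2 - 1) ^ 2` of the radial error as a function of
`x = t ^ 2`, in the shifted coordinates `a = u - 3 * c`, `b = v + 5 * c`, for `c ^ 2 < 1`. -/
noncomputable def radialQuad (c a b x : ℝ) : ℝ :=
  a ^ 2 * x ^ 2 + midCoeff c a b * x + (b ^ 2 - 64)

section ErrSup

variable {f : ℝ → ℝ} {M t : ℝ}

theorem errSup_le (h : ∀ t ∈ Set.Icc (-1 : ℝ) 1, |f t| ≤ M) : errSup f ≤ M :=
  csSup_le ((Set.nonempty_Icc.2 (by norm_num)).image _) (Set.forall_mem_image.2 h)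

theorem abs_le_errSup (hf : ContinuousOn f (Set.Icc (-1) 1)) (ht : t ∈ Set.Icc (-1 : ℝ) 1) :
    |f t| ≤ errSup f :=
  le_csSup (isCompact_Icc.image_of_continuousOn hf.abs).bddAbove (Set.mem_image_of_mem _ ht)

end ErrSup

theorem eq_zero_and_deriv_eq_zero_of_mul {𝕜 : Type*} [NontriviallyNormedField 𝕜] {w q : 𝕜 → 𝕜}
    {s : 𝕜} (hw : DifferentiableAt 𝕜 w s) (hq : DifferentiableAt 𝕜 q s) (hws : w s ≠ 0)
    (h₀ : w s * q s = 0) (h₁ : deriv (fun t => w t * q t) s = 0) : q s = 0 ∧ deriv q s = 0 := by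
  have hqs : q s = 0 := (mul_eq_zero.1 h₀).resolve_left hws
  rw [deriv_fun_mul hw hq, hqs, mul_zero, zero_add] at h₁
  exact ⟨hqs, (mul_eq_zero.1 h₁).resolve_left hws⟩

theorem coeff_lt_of_nonpos_of_pos {α β γ x y : ℝ} (hx : 0 < x) (hxy : x < y)
    (h_x : α * x ^ 2 - β * x + γ ≤ 0) (h_y : 0 < α * y ^ 2 - β * y + γ) :
    β < (x + y) * α ∧ γ < x * y * α := by
  have hsub : 0 < y - x := sub_pos.2 hxy
  constructor
  · refine lt_of_mul_lt_mul_left ?_ hsub.le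
    linarith
  · refine lt_of_mul_lt_mul_left ?_ hsub.le
    have hyx := mul_nonpos_of_nonneg_of_nonpos (hx.trans hxy).le h_x
    have hxy' := mul_pos hx h_y
    linarith

section RadialQuad

variable {c u v : ℝ}

theorem psiUV_eq (hc : c ^ 2 < 1) (t u v : ℝ) :
    psiUV c t u v = (t ^ 2 - 1) ^ 2 / 64 * radialQuad c (u - 3 * c) (v + 5 * c) (t ^ 2) := by
  have hc' : 0 < 1 - c ^ 2 := sub_pos.2 hc
  have hs : √(1 - c ^ 2) ≠ 0 := (Real.sqrt_pos.2 hc').ne'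
  unfold psiUV psiQ radialQuad midCoeff
  set ξ := (v - u) / (8 * √(1 - c ^ 2)) with hξ
  have hsξ : √(1 - c ^ 2) * ξ = (v - u) / 8 := by rw [hξ]; field_simp [hs]
  have hξ_sq : (1 - c ^ 2) * ξ ^ 2 = (v - u) ^ 2 / 64 := by
    linear_combination (√(1 - c ^ 2) * ξ + (v - u) / 8) * hsξ - ξ ^ 2 * Real.sq_sqrt hc'.le
  have hcξ : c ^ 2 / (1 - c ^ 2) * (v - u) ^ 2 = 64 * c ^ 2 * ξ ^ 2 := by
    rw [div_mul_eq_mul_div, div_eq_iff hc'.ne']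
    linear_combination (-64 * c ^ 2) * hξ_sq
  have hshift : (v + 5 * c) - (u - 3 * c) - 8 * c = v - u := by ring
  have hu : 3 * ((u + v) / 6) - 4 * √(1 - c ^ 2) * ξ - 3 * c = u - 3 * c := by
    linear_combination -4 * hsξ
  have hv : 3 * ((u + v) / 6) + 4 * √(1 - c ^ 2) * ξ + 5 * c = v + 5 * c := by
    linear_combination 4 * hsξ
  rw [hshift, hcξ, hu, hv]
  linear_combination (t ^ 2 - 1) ^ 2 * t ^ 2 / 64 * (32 * hξ_sq - 64 * c * hsξ)

theorem continuous_psiUV (hc : c ^ 2 < 1) (u v : ℝ) : Continuous fun t => psiUV c t u v := by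
  simp only [psiUV_eq hc, radialQuad]
  fun_prop

theorem deriv_radialQuad_sq (c a b s : ℝ) :
    deriv (fun t => radialQuad c a b (t ^ 2)) s = 2 * s * (2 * a ^ 2 * s ^ 2 + midCoeff c a b) := by
  have hsq : HasDerivAt (fun t : ℝ => t ^ 2) (2 * s) s := by simpa using hasDerivAt_pow 2 s
  have hquad := (((hsq.fun_pow 2).const_mul (a ^ 2)).add
    (hsq.const_mul (midCoeff c a b))).add_const (b ^ 2 - 64)
  refine (hquad.congr_deriv ?_).deriv
  simp only [Nat.cast_ofNat, Nat.add_one_sub_one, pow_one]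
  ring

theorem radialQuad_eq_of_psiUV_double_root (hc : c ^ 2 < 1) {s : ℝ} (hs : s ≠ 0)
    (hs₁ : s ^ 2 ≠ 1) (h₀ : psiUV c s u v = 0) (h₁ : deriv (fun t => psiUV c t u v) s = 0) (x : ℝ) :
    radialQuad c (u - 3 * c) (v + 5 * c) x = (u - 3 * c) ^ 2 * (x - s ^ 2) ^ 2 := by
  have hweight : (s ^ 2 - 1) ^ 2 / 64 ≠ 0 := by
    have : s ^ 2 - 1 ≠ 0 := sub_ne_zero.2 hs₁
    positivity
  simp only [psiUV_eq hc] at h₀ h₁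
  obtain ⟨hroot, hderiv⟩ := eq_zero_and_deriv_eq_zero_of_mul
    (w := fun t => (t ^ 2 - 1) ^ 2 / 64) (by fun_prop) (by unfold radialQuad; fun_prop)
    hweight h₀ h₁
  rw [deriv_radialQuad_sq] at hderiv
  have hslope := (mul_eq_zero.1 hderiv).resolve_left (by positivity)
  unfold radialQuad at hroot ⊢
  linear_combination hroot + (x - s ^ 2) * hslope

theorem mul_radialQuad_le_errSup (hc : c ^ 2 < 1) {x : ℝ} (hx : x ∈ Set.Icc (0 : ℝ) 1) :
    (1 - x) ^ 2 / 64 * radialQuad c (u - 3 * c) (v + 5 * c) x ≤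
      errSup fun t => psiUV c t u v := by
  have hsqrt : √x ∈ Set.Icc (-1 : ℝ) 1 :=
    ⟨by linarith [Real.sqrt_nonneg x], Real.sqrt_le_one.2 hx.2⟩
  calc (1 - x) ^ 2 / 64 * radialQuad c (u - 3 * c) (v + 5 * c) x
      = psiUV c (√x) u v := by rw [psiUV_eq hc, Real.sq_sqrt hx.1, sub_sq_comm]
    _ ≤ |psiUV c (√x) u v| := le_abs_self _
    _ ≤ errSup fun t => psiUV c t u v :=
        abs_le_errSup (continuous_psiUV hc u v).continuousOn hsqrt

theorem radialQuad_sq_nonneg_of_psiUV_nonneg (hc : c ^ 2 < 1) {t : ℝ} (ht : t ^ 2 ≠ 1)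
    (h : 0 ≤ psiUV c t u v) : 0 ≤ radialQuad c (u - 3 * c) (v + 5 * c) (t ^ 2) := by
  have : t ^ 2 - 1 ≠ 0 := sub_ne_zero.2 ht
  rw [psiUV_eq hc] at h
  exact nonneg_of_mul_nonneg_right h (by positivity)

end RadialQuad

section MidCoeff

variable {c a b A B : ℝ}

theorem sq_div_one_sub_sq_mul_one_sub (hc : c ≠ 1) :
    c ^ 2 / (1 - c ^ 2) * (1 - c) = c ^ 2 / (1 + c) := by
  rw [show 1 - c ^ 2 = (1 + c) * (1 - c) by ring, ← div_div,
    div_mul_cancel₀ _ (sub_ne_zero.2 hc.symm)]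

theorem sq_div_one_add_le_half (hc₀ : -1 / 2 ≤ c) (hc₁ : c < 1) : c ^ 2 / (1 + c) ≤ 1 / 2 := by
  rw [div_le_iff₀ (by linarith)]
  nlinarith

theorem twelve_mul_one_sub_le (hc₀ : -1 < c) :
    12 * (1 - c) ≤ 16 * (c ^ 2 / (1 + c)) + 16 - 24 * c := by
  have hc : 0 < 1 + c := by linarith
  have hdiff : 16 * (c ^ 2 / (1 + c)) + 16 - 24 * c - 12 * (1 - c)
      = 4 * (1 - c) ^ 2 / (1 + c) := by
    field_simp
    ring
  have : 0 ≤ 4 * (1 - c) ^ 2 / (1 + c) := by positivity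
  linarith

theorem mul_sub_le_midCoeff_sub_left (hc₀ : -1 / 2 ≤ c) (hc₁ : c < 1) (haA : a ≤ A)
    (hsum : a + A ≤ 4 * (1 - c) ^ 2) (hb : 8 ≤ b) :
    10 * (1 - c) * (A - a) ≤ midCoeff c a b - midCoeff c A b := by
  set m := c ^ 2 / (1 - c ^ 2)
  have hm₀ : 0 ≤ m := div_nonneg (sq_nonneg c) (by nlinarith)
  have hme : m * (1 - c) = c ^ 2 / (1 + c) := sq_div_one_sub_sq_mul_one_sub hc₁.ne
  have hm_half := sq_div_one_add_le_half hc₀ hc₁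
  have hslope : 10 * (1 - c) ≤ m * (2 * b - a - A - 16 * c) + 2 * b - 24 * c := by
    have hlow := twelve_mul_one_sub_le (c := c) (by linarith)
    have hmono : m * (16 * (1 - c) - 4 * (1 - c) ^ 2) ≤ m * (2 * b - a - A - 16 * c) := by
      refine mul_le_mul_of_nonneg_left ?_ hm₀
      linarith
    have := mul_le_mul_of_nonneg_right (hme.trans_le hm_half) (sub_pos.2 hc₁).le
    linarith
  calc 10 * (1 - c) * (A - a)
      ≤ (m * (2 * b - a - A - 16 * c) + 2 * b - 24 * c) * (A - a) := by
        gcongr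
    _ = midCoeff c a b - midCoeff c A b := by unfold midCoeff; ring

theorem midCoeff_sub_right_le (hc₀ : -1 / 2 ≤ c) (hc₁ : c < 1) (hA : 0 ≤ A) (hbB : b ≤ B)
    (hB : B ≤ 9 - c) : midCoeff c A B - midCoeff c A b ≤ 13 * (B - b) := by
  set m := c ^ 2 / (1 - c ^ 2)
  have hm₀ : 0 ≤ m := div_nonneg (sq_nonneg c) (by nlinarith)
  have hme : m * (1 - c) = c ^ 2 / (1 + c) := sq_div_one_sub_sq_mul_one_sub hc₁.ne
  have hm_half := sq_div_one_add_le_half hc₀ hc₁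
  have hslope : m * (b + B - 2 * A - 16 * c) - 2 * A - 8 * c ≤ 13 := by
    have hmono : m * (b + B - 2 * A - 16 * c) ≤ m * (18 * (1 - c)) := by
      gcongr
      linarith
    linarith
  calc midCoeff c A B - midCoeff c A b
      = (m * (b + B - 2 * A - 16 * c) - 2 * A - 8 * c) * (B - b) := by unfold midCoeff; ring
    _ ≤ 13 * (B - b) := by
        gcongr

theorem four_fifths_mul_le_midCoeff_sub (hc₀ : -1 / 2 ≤ c) (hc₁ : c < 1) (ha : |a| < A)
    (hA : A ≤ 3 / 2 * (1 - c) ^ 2) (hb : 8 ≤ b) (hbB : b ≤ B) (hB : B ≤ 9 - c)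
    (hsq : B ^ 2 - b ^ 2 ≤ (A ^ 2 - a ^ 2) / 5) :
    4 / 5 * (A ^ 2 - a ^ 2) ≤ midCoeff c a b - midCoeff c A B := by
  obtain ⟨ha_neg, haA⟩ := abs_lt.1 ha
  have hleft := mul_sub_le_midCoeff_sub_left hc₀ hc₁ haA.le (by nlinarith) hb
  have hright := midCoeff_sub_right_le hc₀ hc₁ ((abs_nonneg a).trans ha.le) hbB hB
  have hgap : 0 < (1 - c) * (A - a) := mul_pos (sub_pos.2 hc₁) (sub_pos.2 haA)
  have hsum : A + a ≤ 9 / 2 * (1 - c) := by nlinarith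
  have hU : A ^ 2 - a ^ 2 ≤ 9 / 2 * ((1 - c) * (A - a)) := by
    have := mul_le_mul_of_nonneg_right hsum (sub_pos.2 haA).le
    linarith
  have hδ : 16 * (B - b) ≤ B ^ 2 - b ^ 2 := by nlinarith
  linarith

end MidCoeff

section TouchingPoint

variable {τ : ℝ}

theorem two_fifths_lt_of_sq_add_two_mul (hτ₀ : 0 < τ) (hτ : τ ^ 2 + 2 * τ = 1) : 2 / 5 < τ := by
  nlinarith

theorem sq_one_sub_mul_sub_sq_le (hτ : τ ^ 2 + 2 * τ = 1) {x : ℝ}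
    (hx : x ∈ Set.Icc (0 : ℝ) 1) : ((1 - x) * (x - τ ^ 2)) ^ 2 ≤ τ ^ 4 := by
  rw [show τ ^ 4 = (τ ^ 2) ^ 2 by ring]
  apply sq_le_sq'
  · have : 0 ≤ x * (1 - x + τ ^ 2) := mul_nonneg hx.1 (by nlinarith [hx.2])
    linarith
  · have hvertex : τ ^ 2 - (1 - x) * (x - τ ^ 2) = (x - (1 - τ)) ^ 2 := by
      linear_combination (1 - x) * hτ
    nlinarith [sq_nonneg (x - (1 - τ))]

theorem errSup_psiUV_le_of_double_root {c u v : ℝ} (hc : c ^ 2 < 1) (hτ : τ ^ 2 + 2 * τ = 1)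
    (htouch : ∀ x, radialQuad c (u - 3 * c) (v + 5 * c) x = (u - 3 * c) ^ 2 * (x - τ ^ 2) ^ 2)
    {x : ℝ} (hx : x ∈ ({0, 1 - τ} : Set ℝ)) :
    errSup (fun t => psiUV c t u v) ≤
      (1 - x) ^ 2 / 64 * radialQuad c (u - 3 * c) (v + 5 * c) x := by
  have hpeak : (1 - x) ^ 2 / 64 * radialQuad c (u - 3 * c) (v + 5 * c) x =
      (u - 3 * c) ^ 2 / 64 * τ ^ 4 := by
    rw [htouch]
    rcases hx with rfl | rfl
    · ring
    · have : 1 - τ - τ ^ 2 = τ := by linarith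
      rw [this]
      ring
  refine errSup_le fun t ht => ?_
  have hpsi : psiUV c t u v = (u - 3 * c) ^ 2 / 64 * ((1 - t ^ 2) * (t ^ 2 - τ ^ 2)) ^ 2 := by
    rw [psiUV_eq hc, htouch]
    ring
  rw [hpeak, hpsi, abs_of_nonneg (by positivity)]
  gcongr
  exact sq_one_sub_mul_sub_sq_le hτ ⟨sq_nonneg t, (sq_le_one_iff_abs_le_one t).2 (abs_le.2 ht)⟩

variable {c a b A B : ℝ}

theorem coeff_sub_lt_of_radialQuad_lt (hτ₀ : 0 < τ) (hτ : τ ^ 2 + 2 * τ = 1)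
    (h_zero : radialQuad c a b 0 < radialQuad c A B 0)
    (h_touch : radialQuad c A B (τ ^ 2) ≤ radialQuad c a b (τ ^ 2))
    (h_peak : radialQuad c a b (1 - τ) < radialQuad c A B (1 - τ)) :
    a ^ 2 < A ^ 2 ∧ midCoeff c a b - midCoeff c A B < 4 / 5 * (A ^ 2 - a ^ 2) ∧
      B ^ 2 - b ^ 2 < (A ^ 2 - a ^ 2) / 5 := by
  have hτ_gt := two_fifths_lt_of_sq_add_two_mul hτ₀ hτ
  have hτ_lt : τ < 1 / 2 := by nlinarith
  unfold radialQuad at h_zero h_touch h_peak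
  obtain ⟨hP, hW⟩ := coeff_lt_of_nonpos_of_pos (α := A ^ 2 - a ^ 2)
    (β := midCoeff c a b - midCoeff c A B) (γ := B ^ 2 - b ^ 2) (x := τ ^ 2) (y := 1 - τ)
    (by positivity) (by linarith) (by linarith) (by linarith)
  have hprod₀ : 0 < τ ^ 2 * (1 - τ) := mul_pos (by positivity) (by linarith)
  have hU : 0 < A ^ 2 - a ^ 2 := pos_of_mul_pos_right (by linarith) hprod₀.le
  have hsum : τ ^ 2 + (1 - τ) ≤ 4 / 5 := by linarith
  have hprod : τ ^ 2 * (1 - τ) ≤ 1 / 5 := by nlinarith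
  refine ⟨sub_pos.1 hU, hP.trans_le (by gcongr), ?_⟩
  linarith [mul_le_mul_of_nonneg_right hprod hU.le]

theorem eight_le_of_sixty_four_le_sq (hc : -1 / 2 ≤ c) (hc₁ : c < 1)
    (ha : -(3 / 2 * (1 - c) ^ 2) < a) (hab : a < b - 8 * c) (hb : 64 ≤ b ^ 2) : 8 ≤ b := by
  have : -8 < b := by nlinarith
  by_contra! h
  nlinarith

theorem le_nine_sub_of_sq_sub (hc : -1 / 2 ≤ c) (hc₁ : c < 1) (hτ₀ : 0 < τ)
    (hτ : τ ^ 2 + 2 * τ = 1) (hA₀ : 0 ≤ A) (hA : A ≤ 3 / 2 * (1 - c) ^ 2)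
    (hB : B ^ 2 - 64 = A ^ 2 * τ ^ 4) : B ≤ 9 - c := by
  have hτ_lt : τ < 1 / 2 := by nlinarith
  have hc' : 0 < 1 - c := sub_pos.2 hc₁
  have hpow : A ^ 2 * τ ^ 4 ≤ (3 / 2 * (1 - c) ^ 2) ^ 2 * (1 / 2) ^ 4 := by gcongr
  have hcube : (1 - c) ^ 3 ≤ (3 / 2) ^ 3 := by
    gcongr
    linarith
  refine le_of_sq_le_sq ?_ (by linarith)
  nlinarith [mul_le_mul_of_nonneg_right hcube hc'.le]

theorem exists_peak_radialQuad_le (hc₀ : -1 / 2 ≤ c) (hc₁ : c < 1) (hτ₀ : 0 < τ)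
    (hτ : τ ^ 2 + 2 * τ = 1) (hA₀ : 0 < A) (hA : A ≤ 3 / 2 * (1 - c) ^ 2) (hB : 8 ≤ B)
    (htouch : ∀ x, radialQuad c A B x = A ^ 2 * (x - τ ^ 2) ^ 2) (hab : a < b - 8 * c)
    (h_zero : 0 ≤ radialQuad c a b 0) (h_touch : 0 ≤ radialQuad c a b (τ ^ 2)) :
    ∃ x ∈ ({0, 1 - τ} : Set ℝ), radialQuad c A B x ≤ radialQuad c a b x := by
  by_contra! hlt
  have hlt_zero := hlt 0 (by simp)
  obtain ⟨haA, hP, hW⟩ := coeff_sub_lt_of_radialQuad_lt hτ₀ hτ hlt_zero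
    (by rw [htouch]; simpa using h_touch) (hlt (1 - τ) (by simp))
  have ha : |a| < A := abs_lt_of_sq_lt_sq haA hA₀.le
  have hbB : b ^ 2 < B ^ 2 := by simpa [radialQuad] using hlt_zero
  have hb : 64 ≤ b ^ 2 := by simpa [radialQuad] using h_zero
  have hB_sq : B ^ 2 - 64 = A ^ 2 * τ ^ 4 := by
    have := htouch 0
    unfold radialQuad at this
    linarith
  have hb8 := eight_le_of_sixty_four_le_sq hc₀ hc₁ (by linarith [neg_lt_of_abs_lt ha]) hab hb
  have hgrowth := four_fifths_mul_le_midCoeff_sub hc₀ hc₁ ha hA hb8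
    (lt_of_pow_lt_pow_left₀ 2 (by linarith) hbB).le
    (le_nine_sub_of_sq_sub hc₀ hc₁ hτ₀ hτ hA₀.le hA hB_sq) hW.le
  exact hgrowth.not_gt hP

end TouchingPoint

theorem kconst_le : kconst ≤ 3 / 2 := by
  have hsqrt_two : √2 ≤ 2 := Real.sqrt_le_iff.2 (by norm_num)
  have : √((2 * √2 - 1) / 7) ≤ 3 / 4 := Real.sqrt_le_iff.2 ⟨by norm_num, by linarith⟩
  unfold kconst
  linarith

theorem utilde_le (c : ℝ) : utilde c ≤ 3 * c + 3 / 2 * (1 - c) ^ 2 :=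
  calc utilde c = 3 * c + kconst * (1 - c) ^ 2 := by unfold utilde; ring
    _ ≤ 3 * c + 3 / 2 * (1 - c) ^ 2 := by gcongr; exact kconst_le

theorem stmt_19_general {c uh vh : ℝ} (hc₀ : -1 / 2 ≤ c) (hc₁ : c < 1) (hu₀ : 3 * c < uh)
    (hu₁ : uh ≤ 3 * c + 3 / 2 * (1 - c) ^ 2) (hv : 8 - 5 * c ≤ vh)
    (hsys0 : psiUV c (√2 - 1) uh vh = 0)
    (hsys1 : deriv (fun t => psiUV c t uh vh) (√2 - 1) = 0) :
    (∀ t ∈ Set.Icc (-1 : ℝ) 1, 0 ≤ psiUV c t uh vh) ∧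
    ∀ u v : ℝ, u < v → (∀ t ∈ Set.Icc (-1 : ℝ) 1, 0 ≤ psiUV c t u v) →
      errSup (fun t => psiUV c t uh vh) ≤ errSup (fun t => psiUV c t u v) := by
  have hc : c ^ 2 < 1 := by nlinarith
  have hτ₀ : 0 < √2 - 1 := sub_pos.2 Real.one_lt_sqrt_two
  have hτ : (√2 - 1) ^ 2 + 2 * (√2 - 1) = 1 := by
    linear_combination Real.sq_sqrt (zero_le_two : (0 : ℝ) ≤ 2)
  generalize √2 - 1 = τ at *
  have hτ₁ : τ < 1 := by nlinarith
  have hτ_sq : τ ^ 2 < 1 := by linarith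
  have htouch := radialQuad_eq_of_psiUV_double_root hc hτ₀.ne' hτ_sq.ne hsys0 hsys1
  refine ⟨fun t _ => by rw [psiUV_eq hc, htouch]; positivity, fun u v huv houter => ?_⟩
  have hquad {t : ℝ} (ht₀ : 0 ≤ t) (ht₁ : t < 1) :=
    radialQuad_sq_nonneg_of_psiUV_nonneg hc (pow_lt_one₀ ht₀ ht₁ two_ne_zero).ne
      (houter t ⟨by linarith, ht₁.le⟩)
  obtain ⟨x, hx, hle⟩ := exists_peak_radialQuad_le hc₀ hc₁ hτ₀ hτ (sub_pos.2 hu₀)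
    (by linarith) (by linarith) htouch (by linarith : u - 3 * c < v + 5 * c - 8 * c)
    (by simpa using hquad le_rfl one_pos) (hquad hτ₀.le hτ₁)
  have hx₀₁ : x ∈ Set.Icc (0 : ℝ) 1 := by
    rcases hx with rfl | rfl <;> constructor <;> linarith
  calc errSup (fun t => psiUV c t uh vh)
      ≤ (1 - x) ^ 2 / 64 * radialQuad c (uh - 3 * c) (vh + 5 * c) x :=
        errSup_psiUV_le_of_double_root hc hτ htouch hx
    _ ≤ (1 - x) ^ 2 / 64 * radialQuad c (u - 3 * c) (v + 5 * c) x := by gcongr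
    _ ≤ errSup (fun t => psiUV c t u v) := mul_radialQuad_le_errSup hc hx₀₁

/-- The unique solution `(u∧, v∧)` in `D = (3c, ũ) × [8−5c, ∞)` of the system
`ψ_uv(√2−1,u,v) = 0`, `∂ψ_uv/∂t(√2−1,u,v) = 0` induces the optimal outer
quartic G¹ approximant. -/
theorem stmt_19 (c : ℝ) (hc0 : 0 ≤ c) (hc1 : c < 1)
    (uh vh : ℝ)
    (hmem : (uh, vh) ∈ Set.Ioo (3*c) (utilde c) ×ˢ Set.Ici (8 - 5*c))
    (hsys0 : psiUV c (Real.sqrt 2 - 1) uh vh = 0)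
    (hsys1 : deriv (fun t => psiUV c t uh vh) (Real.sqrt 2 - 1) = 0)
    (huniq : ∀ p : ℝ × ℝ, p ∈ Set.Ioo (3*c) (utilde c) ×ˢ Set.Ici (8 - 5*c) →
      psiUV c (Real.sqrt 2 - 1) p.1 p.2 = 0 →
      deriv (fun t => psiUV c t p.1 p.2) (Real.sqrt 2 - 1) = 0 → p = (uh, vh)) :
    (∀ t ∈ Set.Icc (-1 : ℝ) 1, 0 ≤ psiUV c t uh vh) ∧
    ∀ u v : ℝ, u < v → (∀ t ∈ Set.Icc (-1 : ℝ) 1, 0 ≤ psiUV c t u v) →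
      errSup (fun t => psiUV c t uh vh) ≤ errSup (fun t => psiUV c t u v) :=
  stmt_19_general (by linarith) hc1 hmem.1.1 (hmem.1.2.le.trans (utilde_le c)) hmem.2
    hsys0 hsys1
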